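/- Let s > −1/2 and k ∈ ℕ. Let v : [−1,1] → ℝ be such that there is a partition −1 = α_1 < α_2 < ⋯ < α_{n+1} = 1 and functions ṽ_i ∈ C^k[α_i,α_{i+1}] with v = ṽ_i on (α_i,α_{i+1}), and assume (when k ≥ 2) that v ∈ C^{k−2}[−1,1]. Then there exists a constant C > 0 (depending on v and k) such that |v_{j,s}| ≤ C j^{−k} for all j ≥ 1. -/

import Mathlib

open MeasureTheory Filter Set

/-- The Gegenbauer polynomials `C_n^{(λ)}`, defined by their three-term recurrence. -/
noncomputable def gegen (l : ℝ) : ℕ → ℝ → ℝ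
  | 0, _ => 1
  | 1, x => 2 * l * x
  | (n + 2), x =>
      (2 * x * ((n : ℝ) + 2 + l - 1) * gegen l (n + 1) x
        - ((n : ℝ) + 2 + 2 * l - 2) * gegen l n x) / ((n : ℝ) + 2)

/-- The normalization constant `h_j^{(s+1/2)}`. -/
noncomputable def hnorm (s : ℝ) (j : ℕ) : ℝ :=
  Real.sqrt (2 ^ (-(2 * s)) * Real.pi / (Real.Gamma (s + 1 / 2)) ^ 2 *
    (Real.Gamma ((j : ℝ) + 2 * s + 1) / (Real.Gamma ((j : ℝ) + 1) * ((j : ℝ) + s + 1 / 2))))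

/-- The normalized Gegenbauer polynomial `C̃_j^{(s+1/2)} = C_j^{(s+1/2)} / h_j^{(s+1/2)}`. -/
noncomputable def Ctil (s : ℝ) (j : ℕ) (x : ℝ) : ℝ := gegen (s + 1 / 2) j x / hnorm s j

/-- The Gegenbauer coefficient `v_{j,s} = ∫_{-1}^1 v C̃_j^{(s+1/2)} (1-x²)^s dx`. -/
noncomputable def vcoef (s : ℝ) (v : ℝ → ℝ) (j : ℕ) : ℝ :=
  ∫ x in Set.Ioo (-1 : ℝ) 1, v x * Ctil s j x * (1 - x ^ 2) ^ s

/-!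
In terms of normalized polynomials, differentiation of Gegenbauer polynomials is a ladder: with
`ω_j = √((j + 1) (j + 2s + 2))`, `C̃_{j+1}^{(s+1/2)}` has derivative `ω_j C̃_j^{(s+3/2)}`, and
`C̃_j^{(s+3/2)} (1 - x²)^{s+1}` has derivative `-ω_j C̃_{j+1}^{(s+1/2)} (1 - x²)^s`. Integrating by
parts with the second relation moves a derivative onto `v`, gains the factor `1 / ω_j = O(1 / j)`
and replaces `s` by `s + 1`. As long as `v` is continuous no boundary terms appear, because the
weight `(1 - x²)^{s+1}` vanishes at `±1`. The last of the `k` integrations by parts is done piece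
by piece and leaves jump terms at the breakpoints. They are `O(1 / j)` because `C̃_j` is bounded in
`j` at every interior point: the energy `C̃_{j+1}² + (1 - x²) (C̃_{j+1}')² / ω_j²` increases with
`|x|`, and its integral against `(1 - x²)^s` equals `2` by orthonormality.
-/

section Gegenbauer

variable (l x : ℝ) (n : ℕ)

lemma gegen_add_two :
    (n + 2) * gegen l (n + 2) x =
      2 * x * (n + 1 + l) * gegen l (n + 1) x - (n + 2 * l) * gegen l n x := by
  have : (n : ℝ) + 2 ≠ 0 := by positivity
  rw [gegen]
  field_simp
  ring

lemma gegen_contiguous :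
    (n + 2) * gegen l (n + 2) x =
        2 * l * (x * gegen (l + 1) (n + 1) x - gegen (l + 1) n x) ∧
      (n + 1 + 2 * l) * gegen l (n + 1) x =
        2 * l * (gegen (l + 1) (n + 1) x - x * gegen (l + 1) n x) := by
  induction n with
  | zero =>
    have := gegen_add_two l x 0
    simp only [gegen, Nat.cast_zero] at *
    exact ⟨by rw [this]; ring, by ring⟩
  | succ n ih =>
    obtain ⟨lower, upper⟩ := ih
    have upper_succ : (n + 2 + 2 * l) * gegen l (n + 2) x =
        2 * l * (gegen (l + 1) (n + 2) x - x * gegen (l + 1) (n + 1) x) := by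
      refine mul_left_cancel₀ (by positivity : (n : ℝ) + 2 ≠ 0) ?_
      linear_combination (n + 2 + 2 * l) * lower - 2 * l * gegen_add_two (l + 1) x n
    have rec_l := gegen_add_two l x (n + 1)
    push_cast at rec_l ⊢
    exact ⟨by linear_combination rec_l + x * lower + x * upper_succ - upper,
      by linear_combination upper_succ⟩

lemma hasDerivAt_gegen_succ :
    HasDerivAt (gegen l (n + 1)) (2 * l * gegen (l + 1) n x) x := by
  induction n using Nat.twoStepInduction with
  | zero => simpa [gegen] using (hasDerivAt_id x).const_mul (2 * l)
  | one =>
    have h := ((((hasDerivAt_id x).const_mul 2).mul_const (0 + 2 + l - 1)).mul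
      ((hasDerivAt_id x).const_mul (2 * l))).sub_const (0 + 2 + 2 * l - 2) |>.div_const (0 + 2)
    convert! h using 1
    · ext y; simp [gegen]
    · simp [gegen]; ring
  | more n ih ih' =>
    have h := ((((hasDerivAt_id x).const_mul 2).mul_const (((n + 1 : ℕ) : ℝ) + 2 + l - 1)).mul
      ih').sub (ih.const_mul (((n + 1 : ℕ) : ℝ) + 2 + 2 * l - 2)) |>.div_const
        (((n + 1 : ℕ) : ℝ) + 2)
    convert! h using 1
    have rec_l := gegen_add_two (l + 1) x n
    have lower := (gegen_contiguous l x n).1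
    have upper := (gegen_contiguous l x (n + 1)).2
    rw [eq_div_iff (by positivity)]
    push_cast at upper ⊢
    simp only [id, mul_one]
    linear_combination 2 * l * rec_l - lower - upper

lemma differentiable_gegen : Differentiable ℝ (gegen l n) := by
  cases n with
  | zero => exact differentiable_const (1 : ℝ)
  | succ n => exact fun x ↦ (hasDerivAt_gegen_succ l x n).differentiableAt

lemma one_sub_sq_mul_deriv_gegen :
    (1 - x ^ 2) * deriv (gegen l n) x =
      (n + 2 * l) * x * gegen l n x - (n + 1) * gegen l (n + 1) x := by
  cases n with
  | zero =>
    have : deriv (gegen l 0) x = 0 := deriv_const x (1 : ℝ)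
    rw [this]
    simp only [gegen, Nat.cast_zero]
    ring
  | succ n =>
    obtain ⟨lower, upper⟩ := gegen_contiguous l x n
    rw [(hasDerivAt_gegen_succ l x n).deriv]
    push_cast
    linear_combination lower - x * upper

lemma one_sub_sq_mul_deriv_gegen_add_one :
    2 * l * ((1 - x ^ 2) * deriv (gegen (l + 1) n) x - (2 * l + 1) * x * gegen (l + 1) n x) =
      -((n + 1) * (n + 1 + 2 * l) * gegen l (n + 1) x) := by
  linear_combination 2 * l * one_sub_sq_mul_deriv_gegen (l + 1) x n +
    (n + 1) * (gegen_contiguous l x n).2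

lemma gegen_neg : gegen l n (-x) = (-1) ^ n * gegen l n x := by
  induction n using Nat.twoStepInduction with
  | zero => simp [gegen]
  | one => simp [gegen]
  | more n ih ih' =>
    rw [gegen, gegen, ih, ih']
    ring

end Gegenbauer

section Normalized

variable {s : ℝ}

/-- The square root of the Sturm–Liouville eigenvalue `(j + 1) (j + 2s + 2)` of
`C_{j+1}^{(s+1/2)}`. It is the factor by which differentiating `C̃_{j+1}^{(s+1/2)}` rescales
`C̃_j^{(s+3/2)}`; the shift of `j` avoids the zero eigenvalue of constants. -/
noncomputable def gegenFreq (s : ℝ) (j : ℕ) : ℝ := √((j + 1) * (j + 2 * s + 2))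

lemma succ_le_gegenFreq (hs : -1 / 2 < s) (j : ℕ) : (j : ℝ) + 1 ≤ gegenFreq s j :=
  Real.le_sqrt_of_sq_le (by nlinarith [j.cast_nonneg (α := ℝ)])

lemma gegenFreq_pos (hs : -1 / 2 < s) (j : ℕ) : 0 < gegenFreq s j :=
  (by positivity : (0 : ℝ) < j + 1).trans_le (succ_le_gegenFreq hs j)

lemma gegenFreq_sq (hs : -1 / 2 < s) (j : ℕ) :
    gegenFreq s j ^ 2 = (j + 1) * (j + 2 * s + 2) :=
  Real.sq_sqrt (mul_nonneg (by positivity) (by linarith [j.cast_nonneg (α := ℝ)]))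

lemma hnorm_radicand_pos (hs : -1 / 2 < s) (j : ℕ) :
    0 < 2 ^ (-(2 * s)) * Real.pi / Real.Gamma (s + 1 / 2) ^ 2 *
      (Real.Gamma (j + 2 * s + 1) / (Real.Gamma (j + 1) * (j + s + 1 / 2))) := by
  have : (0 : ℝ) ≤ j := j.cast_nonneg
  have : 0 < Real.Gamma (s + 1 / 2) := Real.Gamma_pos_of_pos (by linarith)
  have : 0 < Real.Gamma (j + 2 * s + 1) := Real.Gamma_pos_of_pos (by linarith)
  have : 0 < Real.Gamma ((j : ℝ) + 1) := Real.Gamma_pos_of_pos (by linarith)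
  have : 0 < j + s + 1 / 2 := by linarith
  positivity

lemma hnorm_pos (hs : -1 / 2 < s) (j : ℕ) : 0 < hnorm s j :=
  Real.sqrt_pos.2 (hnorm_radicand_pos hs j)

lemma hnorm_sq (hs : -1 / 2 < s) (j : ℕ) :
    hnorm s j ^ 2 = 2 ^ (-(2 * s)) * Real.pi / Real.Gamma (s + 1 / 2) ^ 2 *
      (Real.Gamma (j + 2 * s + 1) / (Real.Gamma (j + 1) * (j + s + 1 / 2))) :=
  Real.sq_sqrt (hnorm_radicand_pos hs j).le

lemma gegenFreq_mul_hnorm_succ (hs : -1 / 2 < s) (j : ℕ) :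
    gegenFreq s j * hnorm s (j + 1) = (2 * s + 1) * hnorm (s + 1) j := by
  have : (0 : ℝ) ≤ j := j.cast_nonneg
  have freq_pos := gegenFreq_pos hs j
  have left_pos := hnorm_pos hs (j + 1)
  have right_pos := hnorm_pos (show -1 / 2 < s + 1 by linarith) j
  rw [← sq_eq_sq₀ (by positivity) (mul_nonneg (by linarith) right_pos.le), mul_pow, mul_pow,
    gegenFreq_sq hs, hnorm_sq hs, hnorm_sq (by linarith)]
  have two_rpow : (2 : ℝ) ^ (-(2 * (s + 1))) = 2 ^ (-(2 * s)) / 4 := by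
    rw [show -(2 * (s + 1)) = -(2 * s) - 2 by ring, Real.rpow_sub two_pos]
    norm_num
  have Gamma_order : Real.Gamma (s + 1 + 1 / 2) = (s + 1 / 2) * Real.Gamma (s + 1 / 2) := by
    rw [← Real.Gamma_add_one (by linarith)]
    ring_nf
  have Gamma_num : Real.Gamma (j + 2 * (s + 1) + 1) =
      (j + 2 * s + 2) * Real.Gamma (j + 2 * s + 2) := by
    rw [← Real.Gamma_add_one (by linarith)]
    ring_nf
  have Gamma_den : Real.Gamma ((j : ℝ) + 1 + 1) = (j + 1) * Real.Gamma (j + 1) :=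
    Real.Gamma_add_one (by positivity)
  rw [two_rpow, Gamma_order, Gamma_num]
  push_cast
  rw [Gamma_den, show (j : ℝ) + 1 + 2 * s + 1 = j + 2 * s + 2 by ring,
    show (j : ℝ) + (s + 1) + 1 / 2 = j + 1 + s + 1 / 2 by ring,
    show 2 * s + 1 = 2 * (s + 1 / 2) by ring]
  have : Real.Gamma (s + 1 / 2) ≠ 0 := (Real.Gamma_pos_of_pos (by linarith)).ne'
  have : Real.Gamma ((j : ℝ) + 1) ≠ 0 := (Real.Gamma_pos_of_pos (by linarith)).ne'
  have : s + 1 / 2 ≠ 0 := by linarith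
  have : (j : ℝ) + 1 + s + 1 / 2 ≠ 0 := by linarith
  generalize s + 1 / 2 = l at *
  generalize (j : ℝ) + 1 + s + 1 / 2 = m at *
  field_simp
  ring

lemma differentiable_Ctil (s : ℝ) (j : ℕ) : Differentiable ℝ (Ctil s j) :=
  (differentiable_gegen (s + 1 / 2) j).div_const _

lemma hasDerivAt_Ctil_succ (hs : -1 / 2 < s) (j : ℕ) (x : ℝ) :
    HasDerivAt (Ctil s (j + 1)) (gegenFreq s j * Ctil (s + 1) j x) x := by
  convert! (hasDerivAt_gegen_succ (s + 1 / 2) x j).div_const (hnorm s (j + 1)) using 1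
  have h := gegenFreq_mul_hnorm_succ hs j
  have := (hnorm_pos hs (j + 1)).ne'
  have := (hnorm_pos (show -1 / 2 < s + 1 by linarith) j).ne'
  rw [Ctil, add_right_comm s 1, ← mul_div_assoc, div_eq_div_iff ‹_› ‹_›]
  linear_combination gegen (s + 1 / 2 + 1) j x * h

lemma one_sub_sq_mul_deriv_Ctil (hs : -1 / 2 < s) (j : ℕ) (x : ℝ) :
    (1 - x ^ 2) * deriv (Ctil (s + 1) j) x =
      2 * (s + 1) * x * Ctil (s + 1) j x - gegenFreq s j * Ctil s (j + 1) x := by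
  have h := one_sub_sq_mul_deriv_gegen_add_one (s + 1 / 2) x j
  have freq_sq := gegenFreq_sq hs j
  have norm_succ := gegenFreq_mul_hnorm_succ hs j
  have := (hnorm_pos hs (j + 1)).ne'
  have := (hnorm_pos (show -1 / 2 < s + 1 by linarith) j).ne'
  have order_ne_zero : 2 * s + 1 ≠ 0 := by linarith
  have deriv_Ctil : deriv (Ctil (s + 1) j) x =
      deriv (gegen (s + 1 / 2 + 1) j) x / hnorm (s + 1) j := by
    rw [← deriv_div_const, ← add_right_comm]
    rfl
  rw [deriv_Ctil, Ctil, Ctil, add_right_comm s 1]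
  generalize gegen (s + 1 / 2) (j + 1) x = p at *
  generalize gegen (s + 1 / 2 + 1) j x = q at *
  generalize deriv (gegen (s + 1 / 2 + 1) j) x = q' at *
  field_simp
  refine mul_left_cancel₀ order_ne_zero ?_
  linear_combination hnorm s (j + 1) * (h + p * freq_sq) - p * gegenFreq s j * norm_succ

lemma sq_Ctil_abs (s : ℝ) (j : ℕ) (x : ℝ) : Ctil s j |x| ^ 2 = Ctil s j x ^ 2 := by
  obtain h | h := abs_choice x
  · rw [h]
  · rw [h, Ctil, Ctil, gegen_neg, div_pow, mul_pow, ← pow_mul, mul_comm j, pow_mul, neg_one_sq,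
      one_pow, one_mul, div_pow]

end Normalized

section Weight

variable {s : ℝ}

lemma one_sub_sq_nonneg {x : ℝ} (hx : x ∈ Icc (-1 : ℝ) 1) : 0 ≤ 1 - x ^ 2 := by
  nlinarith [hx.1, hx.2]

lemma one_sub_sq_pos {x : ℝ} (hx : x ∈ Ioo (-1 : ℝ) 1) : 0 < 1 - x ^ 2 := by
  nlinarith [hx.1, hx.2]

lemma beta_eq_integral {a b : ℝ} (ha : 0 < a) (hb : 0 < b) :
    ProbabilityTheory.beta a b = ∫ t in (0 : ℝ)..1, t ^ (a - 1) * (1 - t) ^ (b - 1) := by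
  have ofReal_integrand : ∀ t ∈ uIcc (0 : ℝ) 1,
      (t : ℂ) ^ ((a : ℂ) - 1) * (1 - (t : ℂ)) ^ ((b : ℂ) - 1) =
        ((t ^ (a - 1) * (1 - t) ^ (b - 1) : ℝ) : ℂ) := by
    intro t ht
    rw [uIcc_of_le zero_le_one] at ht
    rw [Complex.ofReal_mul, Complex.ofReal_cpow ht.1, Complex.ofReal_cpow (sub_nonneg.2 ht.2)]
    push_cast
    rfl
  rw [ProbabilityTheory.beta_eq_betaIntegralReal a b ha hb, Complex.betaIntegral,
    intervalIntegral.integral_congr ofReal_integrand, intervalIntegral.integral_ofReal,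
    Complex.ofReal_re]

lemma integral_one_sub_sq_rpow (hs : -1 < s) :
    ∫ x in (-1 : ℝ)..1, (1 - x ^ 2) ^ s =
      2 ^ (2 * s + 1) * ProbabilityTheory.beta (s + 1) (s + 1) := by
  have substitution := intervalIntegral.integral_comp_mul_sub (a := 0) (b := 1)
    (fun x : ℝ ↦ (1 - x ^ 2) ^ s) two_ne_zero 1
  have integrand_eq : ∀ t ∈ uIcc (0 : ℝ) 1,
      (1 - (2 * t - 1) ^ 2) ^ s = 4 ^ s * (t ^ s * (1 - t) ^ s) := by
    intro t ht
    rw [uIcc_of_le zero_le_one] at ht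
    rw [← Real.mul_rpow ht.1 (sub_nonneg.2 ht.2),
      ← Real.mul_rpow zero_le_four (mul_nonneg ht.1 (sub_nonneg.2 ht.2))]
    ring_nf
  rw [intervalIntegral.integral_congr integrand_eq, intervalIntegral.integral_const_mul]
    at substitution
  norm_num at substitution
  rw [beta_eq_integral (by linarith) (by linarith), add_sub_cancel_right,
    Real.rpow_add_one two_ne_zero, Real.rpow_mul zero_le_two]
  norm_num
  linarith

lemma integral_one_sub_sq_rpow_pos (hs : -1 < s) : 0 < ∫ x in (-1 : ℝ)..1, (1 - x ^ 2) ^ s := by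
  have := ProbabilityTheory.beta_pos (show 0 < s + 1 by linarith) (show 0 < s + 1 by linarith)
  rw [integral_one_sub_sq_rpow hs]
  positivity

lemma intervalIntegrable_one_sub_sq_rpow (hs : -1 < s) {a b : ℝ} (hab : a ≤ b)
    (hsub : Icc a b ⊆ Icc (-1) 1) :
    IntervalIntegrable (fun x : ℝ ↦ (1 - x ^ 2) ^ s) volume a b := by
  -- A non-integrable weight would have integral `0` by convention.
  have hfull := intervalIntegral.intervalIntegrable_of_integral_ne_zero
    (integral_one_sub_sq_rpow_pos hs).ne'
  refine hfull.mono_set ?_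
  rwa [uIcc_of_le hab, uIcc_of_le (by norm_num)]

lemma hnorm_zero_sq (hs : -1 / 2 < s) :
    hnorm s 0 ^ 2 = ∫ x in (-1 : ℝ)..1, (1 - x ^ 2) ^ s := by
  have duplication := Real.Gamma_mul_Gamma_add_half (s + 1 / 2)
  rw [show s + 1 / 2 + 1 / 2 = s + 1 by ring, show 2 * (s + 1 / 2) = 2 * s + 1 by ring,
    show 1 - (2 * s + 1) = -(2 * s) by ring] at duplication
  have sq_duplication : (Real.Gamma (s + 1 / 2) * Real.Gamma (s + 1)) ^ 2 =
      (Real.Gamma (2 * s + 1) * 2 ^ (-(2 * s))) ^ 2 * Real.pi := by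
    rw [duplication, mul_pow _ √Real.pi, Real.sq_sqrt Real.pi_nonneg]
  have Gamma_den : Real.Gamma (s + 1 + (s + 1)) = (2 * s + 1) * Real.Gamma (2 * s + 1) := by
    rw [← Real.Gamma_add_one (by linarith)]
    ring_nf
  have two_rpow : (2 : ℝ) ^ (2 * s + 1) = 2 / 2 ^ (-(2 * s)) := by
    rw [Real.rpow_add_one two_ne_zero, Real.rpow_neg zero_le_two, div_inv_eq_mul, mul_comm]
  have : Real.Gamma (s + 1 / 2) ≠ 0 := (Real.Gamma_pos_of_pos (by linarith)).ne'
  have : Real.Gamma (2 * s + 1) ≠ 0 := (Real.Gamma_pos_of_pos (by linarith)).ne'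
  have : (2 : ℝ) ^ (-(2 * s)) ≠ 0 := (Real.rpow_pos_of_pos two_pos _).ne'
  have : s + 1 / 2 ≠ 0 := by linarith
  rw [hnorm_sq hs, integral_one_sub_sq_rpow (by linarith), ProbabilityTheory.beta, Gamma_den,
    two_rpow, Nat.cast_zero, zero_add, zero_add, zero_add, Real.Gamma_one]
  rw [show 2 * s + 1 = 2 * (s + 1 / 2) by ring] at *
  generalize s + 1 / 2 = l at *
  field_simp
  linear_combination -sq_duplication

end Weight

section WeightedGegen

variable {s : ℝ}

/-- The normalized Gegenbauer polynomial multiplied by its orthogonality weight, the kernel against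
which `vcoef` integrates. -/
noncomputable def weightedGegen (s : ℝ) (j : ℕ) (x : ℝ) : ℝ := Ctil s j x * (1 - x ^ 2) ^ s

lemma vcoef_eq_intervalIntegral (s : ℝ) (v : ℝ → ℝ) (j : ℕ) :
    vcoef s v j = ∫ x in (-1 : ℝ)..1, v x * weightedGegen s j x := by
  rw [intervalIntegral.integral_of_le (by norm_num), integral_Ioc_eq_integral_Ioo]
  simp only [vcoef, weightedGegen, mul_assoc]

lemma continuous_weightedGegen (hs : 0 ≤ s) (j : ℕ) : Continuous (weightedGegen s j) :=
  (differentiable_Ctil s j).continuous.mul (by fun_prop (disch := simp [hs]))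

lemma weightedGegen_of_sq_eq_one (hs : s ≠ 0) (j : ℕ) {x : ℝ} (hx : x ^ 2 = 1) :
    weightedGegen s j x = 0 := by
  rw [weightedGegen, hx, sub_self, Real.zero_rpow hs, mul_zero]

lemma hasDerivAt_weightedGegen (hs : -1 / 2 < s) (j : ℕ) {x : ℝ} (hx : x ∈ Ioo (-1 : ℝ) 1) :
    HasDerivAt (weightedGegen (s + 1) j) (-(gegenFreq s j * weightedGegen s (j + 1) x)) x := by
  have pos := one_sub_sq_pos hx
  have hweight : HasDerivAt (fun y : ℝ ↦ (1 - y ^ 2) ^ (s + 1))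
      (-(2 * x) * (s + 1) * (1 - x ^ 2) ^ s) x := by
    simpa using (((hasDerivAt_id x).pow 2).const_sub 1).rpow_const (p := s + 1) (.inl pos.ne')
  convert! (differentiable_Ctil (s + 1) j x).hasDerivAt.mul hweight using 1
  rw [Real.rpow_add_one pos.ne', weightedGegen]
  linear_combination -(1 - x ^ 2) ^ s * one_sub_sq_mul_deriv_Ctil hs j x

variable {a b : ℝ} {f f' : ℝ → ℝ}

lemma intervalIntegrable_weightedGegen (hs : -1 < s) (j : ℕ) (hab : a ≤ b)
    (hsub : Icc a b ⊆ Icc (-1) 1) : IntervalIntegrable (weightedGegen s j) volume a b :=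
  (intervalIntegrable_one_sub_sq_rpow hs hab hsub).continuousOn_mul
    (differentiable_Ctil s j).continuous.continuousOn

lemma intervalIntegrable_mul_weightedGegen (hs : -1 < s) (j : ℕ) (hab : a ≤ b)
    (hsub : Icc a b ⊆ Icc (-1) 1) (hf : ContinuousOn f (Icc a b)) :
    IntervalIntegrable (fun x ↦ f x * weightedGegen s j x) volume a b :=
  (intervalIntegrable_weightedGegen hs j hab hsub).continuousOn_mul (by rwa [uIcc_of_le hab])

lemma intervalIntegrable_Ctil_mul_weightedGegen (hs : -1 < s) (j : ℕ) (hab : a ≤ b)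
    (hsub : Icc a b ⊆ Icc (-1) 1) :
    IntervalIntegrable (fun x ↦ Ctil s j x * weightedGegen s j x) volume a b :=
  intervalIntegrable_mul_weightedGegen hs j hab hsub
    (differentiable_Ctil s j).continuous.continuousOn

lemma integral_mul_weightedGegen_add_one (hs : -1 / 2 < s) (j : ℕ) (hab : a ≤ b)
    (hsub : Icc a b ⊆ Icc (-1) 1) {S : Set ℝ} (hS : S.Countable) (hf : ContinuousOn f (Icc a b))
    (hf' : ∀ x ∈ Ioo a b \ S, HasDerivAt f (f' x) x) (hint : IntervalIntegrable f' volume a b) :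
    ∫ x in a..b, f' x * weightedGegen (s + 1) j x =
      f b * weightedGegen (s + 1) j b - f a * weightedGegen (s + 1) j a +
        gegenFreq s j * ∫ x in a..b, f x * weightedGegen s (j + 1) x := by
  have hcont : Continuous (weightedGegen (s + 1) j) := continuous_weightedGegen (by linarith) j
  have hint_left := hint.mul_continuousOn hcont.continuousOn
  have hint_right :=
    (intervalIntegrable_mul_weightedGegen (s := s) (by linarith) (j + 1) hab hsub hf).const_mul
      (gegenFreq s j)
  have hderiv : ∀ x ∈ Ioo a b \ S, HasDerivAt (fun x ↦ f x * weightedGegen (s + 1) j x)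
      (f' x * weightedGegen (s + 1) j x - gegenFreq s j * (f x * weightedGegen s (j + 1) x)) x := by
    intro x hx
    have hx_mem : x ∈ Ioo (-1 : ℝ) 1 := by
      rw [← interior_Icc] at hx ⊢
      exact interior_mono hsub hx.1
    convert! (hf' x hx).mul (hasDerivAt_weightedGegen hs j hx_mem) using 1
    ring
  have hFTC := integral_eq_of_hasDerivAt_off_countable_of_le
    (fun x ↦ f x * weightedGegen (s + 1) j x) _ hab hS (hf.mul hcont.continuousOn) hderiv
    (hint_left.sub hint_right)
  rw [intervalIntegral.integral_sub hint_left hint_right, intervalIntegral.integral_const_mul]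
    at hFTC
  linarith

lemma vcoef_add_one_deriv (hs : -1 / 2 < s) (j : ℕ) {S : Set ℝ}
    (hS : S.Countable) (hf : ContinuousOn f (Icc (-1) 1))
    (hf' : ∀ x ∈ Ioo (-1) 1 \ S, HasDerivAt f (f' x) x)
    (hint : IntervalIntegrable f' volume (-1) 1) :
    vcoef (s + 1) f' j = gegenFreq s j * vcoef s f (j + 1) := by
  rw [vcoef_eq_intervalIntegral, vcoef_eq_intervalIntegral,
    integral_mul_weightedGegen_add_one hs j (by norm_num) Subset.rfl hS hf hf' hint,
    weightedGegen_of_sq_eq_one (by linarith) j (one_pow 2),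
    weightedGegen_of_sq_eq_one (by linarith) j (by norm_num)]
  ring

lemma integral_Ctil_mul_weightedGegen (hs : -1 / 2 < s) (j : ℕ) :
    ∫ x in (-1 : ℝ)..1, Ctil s j x * weightedGegen s j x = 1 := by
  induction j generalizing s with
  | zero =>
    have := (hnorm_pos hs 0).ne'
    have hprod : ∀ x, Ctil s 0 x * weightedGegen s 0 x =
        (hnorm s 0 ^ 2)⁻¹ * (1 - x ^ 2) ^ s := by
      intro x
      simp only [weightedGegen, Ctil, gegen]
      field_simp
    simp only [hprod, intervalIntegral.integral_const_mul]
    rw [← hnorm_zero_sq hs, inv_mul_cancel₀ (by positivity)]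
  | succ j ih =>
    have hby_parts := vcoef_add_one_deriv hs j countable_empty
      (differentiable_Ctil s (j + 1)).continuous.continuousOn
      (fun x _ ↦ hasDerivAt_Ctil_succ hs j x)
      ((differentiable_Ctil (s + 1) j).continuous.const_mul _ |>.intervalIntegrable _ _)
    simp only [vcoef_eq_intervalIntegral, mul_assoc, intervalIntegral.integral_const_mul,
      ih (show -1 / 2 < s + 1 by linarith)] at hby_parts
    exact (mul_left_cancel₀ (gegenFreq_pos hs j).ne' hby_parts).symm

end WeightedGegen

section UniformBounds

open Asymptotics

variable {s : ℝ}

/-- The Sonin energy `C̃_{j+1}² + (1 - x²) (C̃_{j+1}')² / ω²` of the degree `j + 1` normalized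
Gegenbauer polynomial, `ω = gegenFreq s j`, with the derivative expressed through
`hasDerivAt_Ctil_succ`. Its growth away from `0` turns integral bounds into pointwise ones. -/
noncomputable def gegenEnergy (s : ℝ) (j : ℕ) (x : ℝ) : ℝ :=
  Ctil s (j + 1) x ^ 2 + (1 - x ^ 2) * Ctil (s + 1) j x ^ 2

lemma hasDerivAt_gegenEnergy (hs : -1 / 2 < s) (j : ℕ) (x : ℝ) :
    HasDerivAt (gegenEnergy s j) (2 * (2 * s + 1) * x * Ctil (s + 1) j x ^ 2) x := by
  have h := ((hasDerivAt_Ctil_succ hs j x).pow 2).add ((((hasDerivAt_id x).pow 2).const_sub 1).mul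
    ((differentiable_Ctil (s + 1) j x).hasDerivAt.pow 2))
  convert! h using 1
  simp only [id, Pi.pow_apply]
  linear_combination -2 * Ctil (s + 1) j x * one_sub_sq_mul_deriv_Ctil hs j x

lemma continuous_gegenEnergy (s : ℝ) (j : ℕ) : Continuous (gegenEnergy s j) := by
  have := (differentiable_Ctil s (j + 1)).continuous
  have := (differentiable_Ctil (s + 1) j).continuous
  unfold gegenEnergy
  fun_prop

lemma monotoneOn_gegenEnergy (hs : -1 / 2 < s) (j : ℕ) :
    MonotoneOn (gegenEnergy s j) (Ici 0) := by
  refine monotoneOn_of_deriv_nonneg (convex_Ici 0) (continuous_gegenEnergy s j).continuousOn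
    (fun x _ ↦ (hasDerivAt_gegenEnergy hs j x).differentiableAt.differentiableWithinAt) ?_
  intro x hx
  rw [interior_Ici] at hx
  rw [(hasDerivAt_gegenEnergy hs j x).deriv]
  have : 0 ≤ 2 * s + 1 := by linarith
  have : 0 ≤ x := hx.le
  positivity

lemma gegenEnergy_mul_weight (hs : -1 / 2 < s) (j : ℕ) {x : ℝ} (hx : x ∈ Icc (-1 : ℝ) 1) :
    gegenEnergy s j x * (1 - x ^ 2) ^ s =
      Ctil s (j + 1) x * weightedGegen s (j + 1) x +
        Ctil (s + 1) j x * weightedGegen (s + 1) j x := by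
  rw [gegenEnergy, weightedGegen, weightedGegen,
    Real.rpow_add_one' (one_sub_sq_nonneg hx) (by linarith)]
  ring

lemma integral_gegenEnergy_mul_weight (hs : -1 / 2 < s) (j : ℕ) :
    ∫ x in (-1 : ℝ)..1, gegenEnergy s j x * (1 - x ^ 2) ^ s = 2 := by
  have hle : (-1 : ℝ) ≤ 1 := by norm_num
  rw [intervalIntegral.integral_congr fun x hx ↦
      gegenEnergy_mul_weight hs j (by rwa [uIcc_of_le hle] at hx),
    intervalIntegral.integral_add
      (intervalIntegrable_Ctil_mul_weightedGegen (by linarith) _ hle Subset.rfl)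
      (intervalIntegrable_Ctil_mul_weightedGegen (by linarith) _ hle Subset.rfl),
    integral_Ctil_mul_weightedGegen hs, integral_Ctil_mul_weightedGegen (by linarith)]
  norm_num

lemma gegenEnergy_nonneg (s : ℝ) (j : ℕ) {x : ℝ} (hx : x ∈ Icc (-1 : ℝ) 1) :
    0 ≤ gegenEnergy s j x := by
  have := one_sub_sq_nonneg hx
  unfold gegenEnergy
  positivity

lemma sq_Ctil_succ_le_gegenEnergy (s : ℝ) (j : ℕ) {x : ℝ} (hx : x ∈ Icc (-1 : ℝ) 1) :
    Ctil s (j + 1) x ^ 2 ≤ gegenEnergy s j x :=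
  le_add_of_nonneg_right (mul_nonneg (one_sub_sq_nonneg hx) (sq_nonneg _))

lemma sq_Ctil_succ_mul_integral_le (hs : -1 / 2 < s) (j : ℕ) {x : ℝ} (hx : x ∈ Icc (0 : ℝ) 1) :
    Ctil s (j + 1) x ^ 2 * ∫ y in x..1, (1 - y ^ 2) ^ s ≤ 2 := by
  have hx_mem : x ∈ Icc (-1 : ℝ) 1 := ⟨by linarith [hx.1], hx.2⟩
  have hsub : Icc x 1 ⊆ Icc (-1) 1 := Icc_subset_Icc_left hx_mem.1
  have hweight_nonneg : ∀ y ∈ Icc (-1 : ℝ) 1, 0 ≤ (1 - y ^ 2) ^ s :=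
    fun y hy ↦ Real.rpow_nonneg (one_sub_sq_nonneg hy) s
  have hweight := intervalIntegrable_one_sub_sq_rpow (s := s) (by linarith) hx.2 hsub
  have henergy {a : ℝ} (ha : a ≤ 1) (hsub : Icc a 1 ⊆ Icc (-1) 1) :
      IntervalIntegrable (fun y ↦ gegenEnergy s j y * (1 - y ^ 2) ^ s) volume a 1 :=
    (intervalIntegrable_one_sub_sq_rpow (by linarith) ha hsub).continuousOn_mul
      (continuous_gegenEnergy s j).continuousOn
  calc Ctil s (j + 1) x ^ 2 * ∫ y in x..1, (1 - y ^ 2) ^ s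
      = ∫ y in x..1, Ctil s (j + 1) x ^ 2 * (1 - y ^ 2) ^ s :=
        (intervalIntegral.integral_const_mul _ _).symm
    _ ≤ ∫ y in x..1, gegenEnergy s j y * (1 - y ^ 2) ^ s := by
        refine intervalIntegral.integral_mono_on hx.2 (hweight.const_mul _) (henergy hx.2 hsub)
          fun y hy ↦ mul_le_mul_of_nonneg_right ?_ (hweight_nonneg y (hsub hy))
        exact (sq_Ctil_succ_le_gegenEnergy s j hx_mem).trans
          (monotoneOn_gegenEnergy hs j hx.1 (hx.1.trans hy.1) hy.1)
    _ ≤ ∫ y in (-1 : ℝ)..1, gegenEnergy s j y * (1 - y ^ 2) ^ s := by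
        refine intervalIntegral.integral_mono_interval hx_mem.1 hx.2 le_rfl ?_
          (henergy (by norm_num) Subset.rfl)
        exact (ae_restrict_mem measurableSet_Ioc).mono fun y hy ↦
          mul_nonneg (gegenEnergy_nonneg s j (Ioc_subset_Icc_self hy))
            (hweight_nonneg y (Ioc_subset_Icc_self hy))
    _ = 2 := integral_gegenEnergy_mul_weight hs j

lemma integral_one_sub_sq_rpow_to_one_pos (hs : -1 < s) {x : ℝ} (hx : x ∈ Ico (-1 : ℝ) 1) :
    0 < ∫ y in x..1, (1 - y ^ 2) ^ s :=
  intervalIntegral.intervalIntegral_pos_of_pos_on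
    (intervalIntegrable_one_sub_sq_rpow hs hx.2.le (Icc_subset_Icc_left hx.1))
    (fun _ hy ↦ Real.rpow_pos_of_pos (one_sub_sq_pos ⟨hx.1.trans_lt hy.1, hy.2⟩) s) hx.2

lemma isBigO_Ctil (hs : -1 / 2 < s) {x : ℝ} (hx : x ∈ Ioo (-1 : ℝ) 1) :
    (fun j ↦ Ctil s j x) =O[atTop] fun _ ↦ (1 : ℝ) := by
  have habs : |x| < 1 := abs_lt.2 hx
  have integral_pos : 0 < ∫ y in |x|..1, (1 - y ^ 2) ^ s :=
    integral_one_sub_sq_rpow_to_one_pos (by linarith) ⟨by linarith [abs_nonneg x], habs⟩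
  refine .of_bound √(2 / ∫ y in |x|..1, (1 - y ^ 2) ^ s) ?_
  filter_upwards [eventually_ge_atTop 1] with j hj
  obtain ⟨j, rfl⟩ := Nat.exists_eq_add_of_le' hj
  rw [norm_one, mul_one, Real.norm_eq_abs]
  refine Real.abs_le_sqrt ?_
  rw [le_div_iff₀ integral_pos, ← sq_Ctil_abs]
  exact sq_Ctil_succ_mul_integral_le hs j ⟨abs_nonneg x, habs.le⟩

lemma isBigO_weightedGegen (hs : -1 / 2 < s) (hs₀ : s ≠ 0) {x : ℝ} (hx : x ∈ Icc (-1 : ℝ) 1) :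
    (fun j ↦ weightedGegen s j x) =O[atTop] fun _ ↦ (1 : ℝ) := by
  by_cases hsq : x ^ 2 = 1
  · simpa only [weightedGegen_of_sq_eq_one hs₀ _ hsq] using isBigO_zero _ _
  · have hx_mem : x ∈ Ioo (-1 : ℝ) 1 :=
      ⟨hx.1.lt_of_ne fun h ↦ hsq (by simp [← h]), hx.2.lt_of_ne fun h ↦ hsq (by simp [h])⟩
    simpa only [weightedGegen, mul_comm] using
      (isBigO_Ctil hs hx_mem).const_mul_left ((1 - x ^ 2) ^ s)

lemma abs_weightedGegen_le (s : ℝ) (j : ℕ) {x : ℝ} (hx : x ∈ Icc (-1 : ℝ) 1) :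
    |weightedGegen s j x| ≤ (1 - x ^ 2) ^ s + Ctil s j x * weightedGegen s j x := by
  have hweight_nonneg : 0 ≤ (1 - x ^ 2) ^ s := Real.rpow_nonneg (one_sub_sq_nonneg hx) s
  have abs_le : |Ctil s j x| ≤ 1 + Ctil s j x ^ 2 := by
    nlinarith [sq_nonneg (|Ctil s j x| - 1), sq_abs (Ctil s j x), abs_nonneg (Ctil s j x)]
  calc |weightedGegen s j x| = |Ctil s j x| * (1 - x ^ 2) ^ s := by
        rw [weightedGegen, abs_mul, abs_of_nonneg hweight_nonneg]
    _ ≤ (1 + Ctil s j x ^ 2) * (1 - x ^ 2) ^ s := by gcongr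
    _ = (1 - x ^ 2) ^ s + Ctil s j x * weightedGegen s j x := by
        rw [weightedGegen]
        ring

lemma integral_abs_weightedGegen_le (hs : -1 / 2 < s) (j : ℕ) :
    ∫ x in (-1 : ℝ)..1, |weightedGegen s j x| ≤ (∫ x in (-1 : ℝ)..1, (1 - x ^ 2) ^ s) + 1 := by
  have hle : (-1 : ℝ) ≤ 1 := by norm_num
  have hweight := intervalIntegrable_one_sub_sq_rpow (s := s) (by linarith) hle Subset.rfl
  have hsq := intervalIntegrable_Ctil_mul_weightedGegen (s := s) (by linarith) j hle Subset.rfl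
  have habs := (intervalIntegrable_weightedGegen (s := s) (by linarith) j hle Subset.rfl).abs
  calc ∫ x in (-1 : ℝ)..1, |weightedGegen s j x|
      ≤ ∫ x in (-1 : ℝ)..1, ((1 - x ^ 2) ^ s + Ctil s j x * weightedGegen s j x) :=
        intervalIntegral.integral_mono_on hle habs (hweight.add hsq)
          fun _ hx ↦ abs_weightedGegen_le s j hx
    _ = (∫ x in (-1 : ℝ)..1, (1 - x ^ 2) ^ s) + 1 := by
        rw [intervalIntegral.integral_add hweight hsq, integral_Ctil_mul_weightedGegen hs]

lemma isBigO_integral_mul_weightedGegen (hs : -1 / 2 < s) {a b : ℝ} (hab : a ≤ b)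
    (hsub : Icc a b ⊆ Icc (-1) 1) {f : ℝ → ℝ} (hf : ContinuousOn f (Icc a b)) :
    (fun j ↦ ∫ x in a..b, f x * weightedGegen s j x) =O[atTop] fun _ ↦ (1 : ℝ) := by
  obtain ⟨M, hM⟩ := isCompact_Icc.exists_bound_of_continuousOn hf
  have hM_nonneg : 0 ≤ M := (norm_nonneg _).trans (hM a (left_mem_Icc.2 hab))
  obtain ⟨ha, hb⟩ := (Icc_subset_Icc_iff hab).1 hsub
  have habs (j : ℕ) {c d : ℝ} (hcd : c ≤ d) (h : Icc c d ⊆ Icc (-1) 1) :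
      IntervalIntegrable (fun x ↦ |weightedGegen s j x|) volume c d :=
    (intervalIntegrable_weightedGegen (by linarith) j hcd h).abs
  refine .of_bound (M * ((∫ x in (-1 : ℝ)..1, (1 - x ^ 2) ^ s) + 1)) (.of_forall fun j ↦ ?_)
  rw [norm_one, mul_one]
  calc ‖∫ x in a..b, f x * weightedGegen s j x‖
      ≤ ∫ x in a..b, M * |weightedGegen s j x| := by
        refine intervalIntegral.norm_integral_le_of_norm_le hab (.of_forall fun x hx ↦ ?_)
          ((habs j hab hsub).const_mul M)
        rw [norm_mul]
        exact mul_le_mul_of_nonneg_right (hM x (Ioc_subset_Icc_self hx)) (abs_nonneg _)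
    _ = M * ∫ x in a..b, |weightedGegen s j x| := intervalIntegral.integral_const_mul _ _
    _ ≤ M * ∫ x in (-1 : ℝ)..1, |weightedGegen s j x| := by
        refine mul_le_mul_of_nonneg_left ?_ hM_nonneg
        exact intervalIntegral.integral_mono_interval ha hab hb
          (.of_forall fun _ ↦ abs_nonneg _) (habs j (by norm_num) Subset.rfl)
    _ ≤ M * ((∫ x in (-1 : ℝ)..1, (1 - x ^ 2) ^ s) + 1) :=
        mul_le_mul_of_nonneg_left (integral_abs_weightedGegen_le hs j) hM_nonneg

end UniformBounds

section Decay

open Asymptotics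

variable {s : ℝ}

lemma isBigO_of_gegenFreq_mul_eq (hs : -1 / 2 < s) {u w : ℕ → ℝ} {k : ℕ}
    (h : ∀ j, gegenFreq s j * u (j + 1) = w j)
    (hw : w =O[atTop] fun j ↦ ((j : ℝ) ^ k)⁻¹) :
    u =O[atTop] fun j ↦ ((j : ℝ) ^ (k + 1))⁻¹ := by
  have inv_isBigO_shift : (fun j : ℕ ↦ (j : ℝ)⁻¹) =O[atTop] fun j ↦ ((j + 1 : ℕ) : ℝ)⁻¹ := by
    refine .of_bound 2 ?_
    filter_upwards [eventually_ge_atTop 1] with j hj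
    have : (1 : ℝ) ≤ j := by exact_mod_cast hj
    rw [norm_inv, norm_inv, RCLike.norm_natCast, RCLike.norm_natCast, ← div_eq_mul_inv,
      inv_eq_one_div, div_le_div_iff₀ (by positivity) (by positivity)]
    push_cast
    linarith
  have freq_inv : (fun j ↦ (gegenFreq s j)⁻¹) =O[atTop] fun j ↦ ((j + 1 : ℕ) : ℝ)⁻¹ := by
    refine .of_norm_le fun j ↦ ?_
    rw [norm_inv, Real.norm_of_nonneg (gegenFreq_pos hs j).le]
    exact inv_anti₀ (by positivity) (by exact_mod_cast succ_le_gegenFreq hs j)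
  have shifted_eq : (fun j ↦ u (j + 1)) = fun j ↦ (gegenFreq s j)⁻¹ * w j := by
    ext j
    rw [← h, inv_mul_cancel_left₀ (gegenFreq_pos hs j).ne']
  simp only [← inv_pow] at hw ⊢
  rw [← map_add_atTop_eq_nat 1, isBigO_map]
  simp only [Function.comp_def, pow_succ']
  rw [shifted_eq]
  exact freq_inv.mul (hw.trans (inv_isBigO_shift.pow k))

lemma isBigO_integral_mul_weightedGegen_of_contDiffOn (hs : -1 / 2 < s) {a b : ℝ} (hab : a < b)
    (hsub : Icc a b ⊆ Icc (-1) 1) {f : ℝ → ℝ} (hf : ContDiffOn ℝ 1 f (Icc a b)) :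
    (fun j ↦ ∫ x in a..b, f x * weightedGegen s j x) =O[atTop] fun j ↦ ((j : ℝ) ^ 1)⁻¹ := by
  set f' := derivWithin f (Icc a b)
  have hf'_cont : ContinuousOn f' (Icc a b) :=
    hf.continuousOn_derivWithin (uniqueDiffOn_Icc hab) le_rfl
  have hf'_deriv : ∀ x ∈ Ioo a b \ ∅, HasDerivAt f (f' x) x := fun x hx ↦
    ((hf.differentiableOn one_ne_zero x (Ioo_subset_Icc_self hx.1)).hasDerivWithinAt).hasDerivAt
      (Icc_mem_nhds hx.1.1 hx.1.2)
  have by_parts (j : ℕ) := integral_mul_weightedGegen_add_one hs j hab.le hsub countable_empty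
    hf.continuousOn hf'_deriv (hf'_cont.intervalIntegrable_of_Icc hab.le)
  have endpoint {x : ℝ} (hx : x ∈ Icc a b) :=
    (isBigO_weightedGegen (s := s + 1) (by linarith) (by linarith) (hsub hx)).const_mul_left (f x)
  refine isBigO_of_gegenFreq_mul_eq (k := 0) hs
    (w := fun j ↦ (∫ x in a..b, f' x * weightedGegen (s + 1) j x) -
      (f b * weightedGegen (s + 1) j b - f a * weightedGegen (s + 1) j a))
    (fun j ↦ by rw [by_parts]; ring) ?_
  simpa only [pow_zero, inv_one] using
    (isBigO_integral_mul_weightedGegen (by linarith) hab.le hsub hf'_cont).sub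
      ((endpoint (right_mem_Icc.2 hab.le)).sub (endpoint (left_mem_Icc.2 hab.le)))

end Decay

section Piecewise

open Asymptotics

/-- The function `v` is piecewise `C^k` with respect to the partition `a 0 < a 1 < ⋯ < a n`: on each
open piece it agrees with a function that is `C^k` up to the end points. The partition is indexed by
`ℕ` instead of `Fin (n + 1)`; the values `a i` with `n < i` are irrelevant. -/
structure IsPiecewiseContDiff (k : ℕ) (a : ℕ → ℝ) (n : ℕ) (v : ℝ → ℝ) : Prop where
  strictMonoOn : StrictMonoOn a (Iic n)
  exists_contDiffOn : ∀ i < n, ∃ f : ℝ → ℝ, ContDiffOn ℝ k f (Icc (a i) (a (i + 1))) ∧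
    EqOn v f (Ioo (a i) (a (i + 1)))

lemma exists_mem_Ioo_of_notMem_range {X : Type*} [LinearOrder X] {a : ℕ → X} {n : ℕ} {x : X}
    (hx : x ∈ Ioo (a 0) (a n)) (hxa : x ∉ range a) : ∃ i < n, x ∈ Ioo (a i) (a (i + 1)) := by
  have := Ioc_subset_biUnion_Ioc n a (Ioo_subset_Ioc_self hx)
  simp only [mem_iUnion, Finset.mem_range] at this
  obtain ⟨i, hi, hxi⟩ := this
  exact ⟨i, hi, hxi.1, hxi.2.lt_of_ne fun h ↦ hxa ⟨i + 1, h.symm⟩⟩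

namespace IsPiecewiseContDiff

variable {k n i : ℕ} {a : ℕ → ℝ} {v : ℝ → ℝ}

lemma of_fin {α : Fin (n + 1) → ℝ} (hα : StrictMono α) {f : Fin n → ℝ → ℝ}
    (hf : ∀ i, ContDiffOn ℝ k (f i) (Icc (α i.castSucc) (α i.succ)))
    (hv : ∀ i, EqOn v (f i) (Ioo (α i.castSucc) (α i.succ))) :
    IsPiecewiseContDiff k (fun i ↦ α (Fin.ofNat (n + 1) i)) n v where
  strictMonoOn i hi j hj hij := hα <| by
    rw [Fin.lt_def, Fin.val_ofNat, Fin.val_ofNat, Nat.mod_eq_of_lt (Nat.lt_succ_of_le hi),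
      Nat.mod_eq_of_lt (Nat.lt_succ_of_le hj)]
    exact hij
  exists_contDiffOn i hi := by
    have left : Fin.ofNat (n + 1) i = (⟨i, hi⟩ : Fin n).castSucc :=
      Fin.ext (Nat.mod_eq_of_lt (by lia))
    have right : Fin.ofNat (n + 1) (i + 1) = (⟨i, hi⟩ : Fin n).succ :=
      Fin.ext (Nat.mod_eq_of_lt (by lia))
    rw [left, right]
    exact ⟨f ⟨i, hi⟩, hf _, hv _⟩

lemma lt_succ (h : IsPiecewiseContDiff k a n v) (hi : i < n) : a i < a (i + 1) :=
  h.strictMonoOn (mem_Iic.2 hi.le) (mem_Iic.2 hi) i.lt_succ_self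

lemma Icc_subset (h : IsPiecewiseContDiff k a n v) (hi : i < n) :
    Icc (a i) (a (i + 1)) ⊆ Icc (a 0) (a n) :=
  Icc_subset_Icc (h.strictMonoOn.monotoneOn (mem_Iic.2 n.zero_le) (mem_Iic.2 hi.le) i.zero_le)
    (h.strictMonoOn.monotoneOn (mem_Iic.2 hi) (mem_Iic.2 le_rfl) hi)

lemma hasDerivAt (h : IsPiecewiseContDiff (k + 1) a n v) (hi : i < n) {x : ℝ}
    (hx : x ∈ Ioo (a i) (a (i + 1))) :
    HasDerivAt v (derivWithin v (Icc (a 0) (a n)) x) x := by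
  obtain ⟨f, hf, hvf⟩ := h.exists_contDiffOn i hi
  have hpiece : Icc (a i) (a (i + 1)) ∈ nhds x := Icc_mem_nhds hx.1 hx.2
  have hfx : DifferentiableAt ℝ f x :=
    (hf.differentiableOn (by simp) x (Ioo_subset_Icc_self hx)).differentiableAt hpiece
  have hvx : DifferentiableAt ℝ v x :=
    hfx.congr_of_eventuallyEq (hvf.eventuallyEq_of_mem (Ioo_mem_nhds hx.1 hx.2))
  rw [derivWithin_of_mem_nhds (mem_of_superset hpiece (h.Icc_subset hi))]
  exact hvx.hasDerivAt

lemma derivWithin_Icc (h : IsPiecewiseContDiff (k + 1) a n v) :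
    IsPiecewiseContDiff k a n (derivWithin v (Icc (a 0) (a n))) where
  strictMonoOn := h.strictMonoOn
  exists_contDiffOn i hi := by
    obtain ⟨f, hf, hvf⟩ := h.exists_contDiffOn i hi
    refine ⟨derivWithin f (Icc (a i) (a (i + 1))),
      hf.derivWithin (uniqueDiffOn_Icc (h.lt_succ hi)) (by norm_cast), fun x hx ↦ ?_⟩
    have hfv := hvf.eventuallyEq_of_mem (Ioo_mem_nhds hx.1 hx.2)
    rw [← (h.hasDerivAt hi hx).deriv, hfv.deriv_eq,
      derivWithin_of_mem_nhds (Icc_mem_nhds hx.1 hx.2)]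

lemma intervalIntegrable (h : IsPiecewiseContDiff k a n v) :
    IntervalIntegrable v volume (a 0) (a n) := by
  refine .trans_iterate fun i hi ↦ ?_
  obtain ⟨f, hf, hvf⟩ := h.exists_contDiffOn i hi
  have hle := (h.lt_succ hi).le
  exact (hf.continuousOn.intervalIntegrable_of_Icc hle).congr_uIoo
    (by rwa [uIoo_of_le hle, eqOn_comm])

lemma isBigO_integral_mul_weightedGegen {s : ℝ} (hs : -1 / 2 < s)
    (h : IsPiecewiseContDiff 1 a n v) (hsub : Icc (a 0) (a n) ⊆ Icc (-1) 1) :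
    (fun j ↦ ∫ x in (a 0)..(a n), v x * weightedGegen s j x) =O[atTop]
      fun j ↦ ((j : ℝ) ^ 1)⁻¹ := by
  choose! f hf hvf using h.exists_contDiffOn
  have heqOn (i : ℕ) (hi : i < n) (j : ℕ) : EqOn (fun x ↦ v x * weightedGegen s j x)
      (fun x ↦ f i x * weightedGegen s j x) (Ioo (a i) (a (i + 1))) :=
    fun x hx ↦ congrArg (· * weightedGegen s j x) (hvf i hi hx)
  have hint (i : ℕ) (hi : i < n) (j : ℕ) :
      IntervalIntegrable (fun x ↦ v x * weightedGegen s j x) volume (a i) (a (i + 1)) := by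
    have hle := (h.lt_succ hi).le
    exact (intervalIntegrable_mul_weightedGegen (s := s) (by linarith) j hle
      ((h.Icc_subset hi).trans hsub) (hf i hi).continuousOn).congr_uIoo
      (by rw [uIoo_of_le hle, eqOn_comm]; exact heqOn i hi j)
  have hsum : (fun j ↦ ∫ x in (a 0)..(a n), v x * weightedGegen s j x) =
      fun j ↦ ∑ i ∈ Finset.range n, ∫ x in (a i)..(a (i + 1)), f i x * weightedGegen s j x := by
    ext j
    rw [← intervalIntegral.sum_integral_adjacent_intervals fun i hi ↦ hint i hi j]
    refine Finset.sum_congr rfl fun i hi ↦ ?_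
    rw [Finset.mem_range] at hi
    exact intervalIntegral.integral_congr_Ioo_of_le (h.lt_succ hi).le (heqOn i hi j)
  rw [hsum]
  refine .fun_sum fun i hi ↦ ?_
  rw [Finset.mem_range] at hi
  exact isBigO_integral_mul_weightedGegen_of_contDiffOn hs (h.lt_succ hi)
    ((h.Icc_subset hi).trans hsub) (by exact_mod_cast hf i hi)

lemma isBigO_vcoef {s : ℝ} (hs : -1 / 2 < s) (hk : 1 ≤ k) (h : IsPiecewiseContDiff k a n v)
    (ha : a 0 = -1) (hn : a n = 1)
    (hv : 2 ≤ k → ContDiffOn ℝ (k - 2 : ℕ) v (Icc (-1) 1)) :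
    vcoef s v =O[atTop] fun j ↦ ((j : ℝ) ^ k)⁻¹ := by
  induction k, hk using Nat.le_induction generalizing s v with
  | base =>
    have hpieces := h.isBigO_integral_mul_weightedGegen hs (by rw [ha, hn])
    rw [ha, hn] at hpieces
    exact hpieces.congr_left fun j ↦ (vcoef_eq_intervalIntegral s v j).symm
  | succ k hk ih =>
    have hv_cont : ContDiffOn ℝ (k - 1 : ℕ) v (Icc (-1) 1) := hv (by lia)
    have hderiv := h.derivWithin_Icc
    have hint := hderiv.intervalIntegrable
    have hdiff : ∀ x ∈ Ioo (a 0) (a n) \ range a,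
        HasDerivAt v (derivWithin v (Icc (a 0) (a n)) x) x := by
      rintro x ⟨hx, hxa⟩
      obtain ⟨i, hi, hxi⟩ := exists_mem_Ioo_of_notMem_range hx hxa
      exact h.hasDerivAt hi hxi
    rw [ha, hn] at hderiv hint hdiff
    refine isBigO_of_gegenFreq_mul_eq hs (fun j ↦ (vcoef_add_one_deriv hs j (countable_range a)
      hv_cont.continuousOn hdiff hint).symm) (ih (by linarith) hderiv fun hk' ↦ ?_)
    refine hv_cont.derivWithin (uniqueDiffOn_Icc (by norm_num)) ?_
    exact_mod_cast (by lia : k - 2 + 1 ≤ k - 1)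

end IsPiecewiseContDiff

end Piecewise

theorem stmt15 (s : ℝ) (hs : -1 / 2 < s) (k : ℕ) (hk : 1 ≤ k)
    (n : ℕ) (hn : 1 ≤ n) (α : Fin (n + 1) → ℝ)
    (hα0 : α 0 = -1) (hα1 : α (Fin.last n) = 1) (hmono : StrictMono α)
    (v : ℝ → ℝ) (vt : Fin n → ℝ → ℝ)
    (hvt : ∀ i : Fin n, ContDiffOn ℝ k (vt i) (Set.Icc (α i.castSucc) (α i.succ)))
    (hv_eq : ∀ i : Fin n, ∀ x ∈ Set.Ioo (α i.castSucc) (α i.succ), v x = vt i x)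
    (hv_glob : 2 ≤ k → ContDiffOn ℝ ((k : ℕ) - 2 : ℕ) v (Set.Icc (-1 : ℝ) 1)) :
    ∃ C > (0 : ℝ), ∀ j : ℕ, 1 ≤ j → |vcoef s v j| ≤ C / (j : ℝ) ^ k := by
  have hpiecewise := IsPiecewiseContDiff.of_fin hmono hvt hv_eq
  have hdecay := hpiecewise.isBigO_vcoef hs hk hα0 (by simpa using hα1) hv_glob
  obtain ⟨C, hC, hbound⟩ := Asymptotics.bound_of_isBigO_nat_atTop hdecay
  refine ⟨C, hC, fun j hj ↦ ?_⟩
  have hj_pos : (0 : ℝ) < (j : ℝ) ^ k := by positivity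
  simpa [div_eq_mul_inv] using hbound (inv_ne_zero hj_pos.ne')
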